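/- Let e > 0 and m be real numbers, let a_L > 1 be an integer, and let α > 0 with K := α + m − e > 0 and K ≠ (e/2)a_L(a_L−1). Let ch^a := (1, a_L·Θ, −(e/2)a_L²), ch^b := (1, (a_L−1)·Θ, −(e/2)(a_L−1)²), and for 0 < λ < 1 with λ + (m − e/2 − 1)λ² > 0 let q_vs(λ) := K/(2(λ + (m − e/2 − 1)λ²)) (the volume section). Then there exists λ₀ ∈ (0,1) such that, writing Q(λ) for the unique real number with (λ, Q(λ)) on the potential wall W(ch^a, ch^b) for λ ∈ (0,λ₀), either q_vs(λ) > Q(λ) for all λ ∈ (0,λ₀), or q_vs(λ) < Q(λ) for all λ ∈ (0,λ₀) (according to the sign of K − (e/2)a_L(a_L−1)); in particular the point (λ, q_vs(λ)) never lies on W(ch^a, ch^b) for λ ∈ (0,λ₀). -/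

import Mathlib

open Set Filter

/-!
A point `(H, q)` lies on the wall of `O(aD)` and `O(bD)` with `a ≠ b` and `D·H ≠ 0` exactly when
`H² q = -(D²/2) a b`: after cancelling `(a - b) D·H`, the wall only sees the product `H² q`. The
volume section is the level set `H² q = K` of the same product. So where `H² > 0` the two curves are
compared by comparing two constants, and near `λ = 0⁺` both `H_λ² > 0` and `Θ·H_λ > 0` hold, because
`H_λ² = 2λ(1 + O(λ))` and `Θ·H_λ = 1 + O(λ)`.
-/

open scoped Topology

/-- A numerical Chern character `(ch₀, ch₁, ch₂)` on a surface with Néron–Severi space `N`; the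
degree-zero and degree-four parts are recorded as real numbers. -/
structure ChernCharacter (N : Type*) where
  ch₀ : ℝ
  ch₁ : N
  ch₂ : ℝ

section Walls

variable {N : Type*} [AddCommGroup N] [Module ℝ N] (B : LinearMap.BilinForm ℝ N)

/-- The Chern character `(1, D, D²/2)` of the line bundle `O(D)`, where `D² = B D D`. -/
noncomputable def lineBundleCh (D : N) : ChernCharacter N :=
  ⟨1, D, B D D / 2⟩

/-- The central charge at vanishing B-field, with polarisation `H` and vertical coordinate `q`. The
paper's `Z_{λ,q}` is the case `H = H_λ`, for which `g(λ) = B H H`. -/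
def centralCharge (H : N) (q : ℝ) (v : ChernCharacter N) : ℂ :=
  ⟨-v.ch₂ + v.ch₀ * B H H * q, B v.ch₁ H⟩

/-- The potential wall `W(v, w)`: the points `(H, q)` at which the central charges of `v` and `w`
are real-linearly dependent, stated as the vanishing of a determinant so that vanishing central
charges need no separate treatment. -/
def OnPotentialWall (H : N) (q : ℝ) (v w : ChernCharacter N) : Prop :=
  (centralCharge B H q v).re * (centralCharge B H q w).im =
    (centralCharge B H q w).re * (centralCharge B H q v).im

variable {B}

theorem lineBundleCh_smul {D : N} {e : ℝ} (hD : B D D = -e) (n : ℝ) :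
    lineBundleCh B (n • D) = ⟨1, n • D, -(e / 2) * n ^ 2⟩ := by
  simp only [lineBundleCh, map_smul, LinearMap.smul_apply, smul_eq_mul, hD,
    ChernCharacter.mk.injEq, true_and]
  ring

theorem onPotentialWall_lineBundleCh_smul_iff {D H : N} {e a b : ℝ} (hD : B D D = -e)
    (hab : a ≠ b) (hDH : B D H ≠ 0) (q : ℝ) :
    OnPotentialWall B H q (lineBundleCh B (a • D)) (lineBundleCh B (b • D)) ↔
      B H H * q = e / 2 * a * b := by
  have cancel : (a - b) * B D H ≠ 0 := mul_ne_zero (sub_ne_zero.mpr hab) hDH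
  rw [← mul_right_inj' cancel]
  simp only [OnPotentialWall, centralCharge, lineBundleCh_smul hD, map_smul,
    LinearMap.smul_apply, smul_eq_mul]
  constructor <;> intro h <;> linear_combination -h

theorem onPotentialWall_lineBundleCh_smul_iff_eq_div {D H : N} {e a b : ℝ} (hD : B D D = -e)
    (hab : a ≠ b) (hDH : B D H ≠ 0) (hH : B H H ≠ 0) (q : ℝ) :
    OnPotentialWall B H q (lineBundleCh B (a • D)) (lineBundleCh B (b • D)) ↔
      q = e / 2 * a * b / B H H := by
  rw [onPotentialWall_lineBundleCh_smul_iff hD hab hDH, eq_div_iff hH, mul_comm]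

end Walls

section Polarization

variable {N : Type*} [AddCommGroup N] [Module ℝ N]

/-- The segment of polarisations `H_λ = λ(Θ + mf) + (1 - λ)f` from the fibre class `f` to
`Θ + mf`; the parameter `l` is the paper's `λ`. -/
def polarization (Θ f : N) (m l : ℝ) : N :=
  l • (Θ + m • f) + (1 - l) • f

variable {B : LinearMap.BilinForm ℝ N} {Θ f : N} {e : ℝ}

theorem apply_section_polarization (hΘΘ : B Θ Θ = -e) (hΘf : B Θ f = 1) (m l : ℝ) :
    B Θ (polarization Θ f m l) = 1 + (m - e - 1) * l := by
  simp only [polarization, map_add, map_smul, smul_eq_mul, hΘΘ, hΘf]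
  ring

theorem apply_polarization_self (hB : B.IsSymm) (hΘΘ : B Θ Θ = -e) (hff : B f f = 0)
    (hΘf : B Θ f = 1) (m l : ℝ) :
    B (polarization Θ f m l) (polarization Θ f m l) = 2 * (l + (m - e / 2 - 1) * l ^ 2) := by
  have hfΘ : B f Θ = 1 := (hB.eq f Θ).trans hΘf
  simp only [polarization, map_add, map_smul, LinearMap.add_apply, LinearMap.smul_apply,
    smul_eq_mul, hΘΘ, hΘf, hff, hfΘ]
  ring

theorem eventually_one_add_mul_pos (c : ℝ) : ∀ᶠ l in 𝓝[>] (0 : ℝ), 0 < 1 + c * l := by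
  have hcont : Continuous fun l : ℝ => 1 + c * l := by fun_prop
  exact nhdsWithin_le_nhds (hcont.continuousAt.eventually_const_lt (by simp))

theorem eventually_apply_section_polarization_pos (hΘΘ : B Θ Θ = -e) (hΘf : B Θ f = 1) (m : ℝ) :
    ∀ᶠ l in 𝓝[>] (0 : ℝ), 0 < B Θ (polarization Θ f m l) := by
  simpa only [apply_section_polarization hΘΘ hΘf] using eventually_one_add_mul_pos (m - e - 1)

theorem eventually_apply_polarization_self_pos (hB : B.IsSymm) (hΘΘ : B Θ Θ = -e)
    (hff : B f f = 0) (hΘf : B Θ f = 1) (m : ℝ) :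
    ∀ᶠ l in 𝓝[>] (0 : ℝ), 0 < B (polarization Θ f m l) (polarization Θ f m l) := by
  filter_upwards [eventually_one_add_mul_pos (m - e / 2 - 1), self_mem_nhdsWithin] with l hfactor hl
  calc 0 < 2 * (l * (1 + (m - e / 2 - 1) * l)) := mul_pos two_pos (mul_pos hl hfactor)
    _ = B (polarization Θ f m l) (polarization Θ f m l) := by
      rw [apply_polarization_self hB hΘΘ hff hΘf]
      ring

theorem volume_section_avoids_line_bundle_wall_general (hB : B.IsSymm) (hΘΘ : B Θ Θ = -e)
    (hff : B f f = 0) (hΘf : B Θ f = 1) (m : ℝ) {a b K : ℝ} (hab : a ≠ b)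
    (hK : K ≠ e / 2 * a * b) :
    ∃ l₀ ∈ Ioo (0 : ℝ) 1, ∃ Q : ℝ → ℝ,
      (∀ l ∈ Ioo (0 : ℝ) l₀,
        OnPotentialWall B (polarization Θ f m l) (Q l)
          (lineBundleCh B (a • Θ)) (lineBundleCh B (b • Θ)) ∧
        ∀ q : ℝ, OnPotentialWall B (polarization Θ f m l) q
          (lineBundleCh B (a • Θ)) (lineBundleCh B (b • Θ)) → q = Q l) ∧
      ((∀ l ∈ Ioo (0 : ℝ) l₀, Q l < K / (2 * (l + (m - e / 2 - 1) * l ^ 2))) ∨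
        (∀ l ∈ Ioo (0 : ℝ) l₀, K / (2 * (l + (m - e / 2 - 1) * l ^ 2)) < Q l)) ∧
      (∀ l ∈ Ioo (0 : ℝ) l₀,
        ¬ OnPotentialWall B (polarization Θ f m l) (K / (2 * (l + (m - e / 2 - 1) * l ^ 2)))
          (lineBundleCh B (a • Θ)) (lineBundleCh B (b • Θ))) := by
  obtain ⟨l₀, ⟨hl₀_pos, hl₀_le⟩, hpos⟩ :=
    (mem_nhdsGT_iff_exists_mem_Ioc_Ioo_subset (one_half_pos (α := ℝ))).mp
      ((eventually_apply_section_polarization_pos hΘΘ hΘf m).and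
        (eventually_apply_polarization_self_pos hB hΘΘ hff hΘf m))
  simp only [← apply_polarization_self hB hΘΘ hff hΘf]
  set g : ℝ → ℝ := fun l => B (polarization Θ f m l) (polarization Θ f m l)
  have wall_iff (l : ℝ) (hl : l ∈ Ioo 0 l₀) (q : ℝ) :=
    onPotentialWall_lineBundleCh_smul_iff_eq_div hΘΘ hab (hpos hl).1.ne' (hpos hl).2.ne' q
  have div_g_lt_div_g {x y : ℝ} (hxy : x < y) (l : ℝ) (hl : l ∈ Ioo 0 l₀) : x / g l < y / g l :=
    div_lt_div_of_pos_right hxy (hpos hl).2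
  refine ⟨l₀, ⟨hl₀_pos, hl₀_le.trans_lt one_half_lt_one⟩, fun l => e / 2 * a * b / g l,
    fun l hl => ⟨(wall_iff l hl _).mpr rfl, fun q => (wall_iff l hl q).mp⟩,
    hK.lt_or_gt.symm.imp div_g_lt_div_g div_g_lt_div_g, fun l hl hwall => hK ?_⟩
  exact (div_left_inj' (hpos hl).2.ne').mp ((wall_iff l hl _).mp hwall)

end Polarization

/-- Wall separation for line bundles `O_X(a_LΘ)` on a Picard-rank-two
Weierstraß elliptic surface: if `K = α + m − e > 0` and
`K ≠ (e/2)a_L(a_L−1)`, then for sufficiently small `λ > 0` the volume section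
`q_vs(λ) = K/(2(λ + (m − e/2 − 1)λ²))` lies entirely on one side of the
unique potential wall `W(ch(O_X(a_LΘ)), ch(O_X((a_L−1)Θ)))`; in particular
the point `(λ, q_vs(λ))` never lies on the wall. -/
theorem volume_section_avoids_line_bundle_wall
    {N : Type*} [AddCommGroup N] [Module ℝ N]
    (B : N →ₗ[ℝ] N →ₗ[ℝ] ℝ) (hsymm : ∀ D D' : N, B D D' = B D' D)
    (e m : ℝ) (he : 0 < e) (Θ f : N)
    (hΘΘ : B Θ Θ = -e) (hff : B f f = 0) (hΘf : B Θ f = 1)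
    (aL : ℤ) (haL : 1 < aL)
    (α K : ℝ) (hα : 0 < α) (hK : K = α + m - e) (hKpos : 0 < K)
    (hKne : K ≠ e / 2 * (aL : ℝ) * ((aL : ℝ) - 1))
    (Hl : ℝ → N) (hHl : ∀ l : ℝ, Hl l = l • (Θ + m • f) + (1 - l) • f)
    (g : ℝ → ℝ) (hg : ∀ l : ℝ, g l = B (Hl l) (Hl l))
    (onWall : ℝ → ℝ → Prop)
    (honWall : ∀ l q : ℝ, onWall l q ↔
      (-(-(e / 2) * (aL : ℝ) ^ 2) + 1 * g l * q)
          * B (((aL : ℝ) - 1) • Θ) (Hl l)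
        = (-(-(e / 2) * ((aL : ℝ) - 1) ^ 2) + 1 * g l * q)
          * B ((aL : ℝ) • Θ) (Hl l))
    (qvs : ℝ → ℝ)
    (hqvs : ∀ l : ℝ, qvs l = K / (2 * (l + (m - e / 2 - 1) * l ^ 2))) :
    ∃ l₀ ∈ Ioo (0 : ℝ) 1, ∃ Q : ℝ → ℝ,
      (∀ l ∈ Ioo (0 : ℝ) l₀, onWall l (Q l) ∧ ∀ q : ℝ, onWall l q → q = Q l) ∧
      ((∀ l ∈ Ioo (0 : ℝ) l₀, Q l < qvs l) ∨
        (∀ l ∈ Ioo (0 : ℝ) l₀, qvs l < Q l)) ∧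
      (∀ l ∈ Ioo (0 : ℝ) l₀, ¬ onWall l (qvs l)) := by
  simpa only [OnPotentialWall, centralCharge, lineBundleCh_smul hΘΘ, polarization, honWall, hg,
    hHl, hqvs] using volume_section_avoids_line_bundle_wall_general (B := B) ⟨hsymm⟩ hΘΘ hff hΘf m
      (sub_one_lt (aL : ℝ)).ne' hKne
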